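/- Let m ≥ 1 and let v_r, v₃ be axially symmetric functions, twice continuously differentiable on a neighborhood of the closure of D_m, satisfying the divergence-free condition ∂_r v_r + v_r/r + ∂_{x₃} v₃ = 0 in D_m, with v_r = 0 on ∂^V D_m and v₃ = 0 on ∂^H D_m. Then 2 ∫_{D_m} |∂_{x₃} v_r + ∂_r v₃|² dx + 4 ∫_{D_m} ( |∂_r v_r|² + v_r²/r² ) dx + 4 ∫_{D_m} |∂_{x₃} v₃|² dx = 2 ∫_{D_m} ( |∇v_r|² + v_r²/r² + |∇v₃|² ) dx. -/

import Mathlib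

/-!
Incompressibility gives `∂₃ v₃ = -(∂_r v_r + v_r / r)`. Substituting this turns `r` times the
difference of the two integrands into `-4` times the planar divergence
`∂_r (r v_r ∂₃ v₃ + v_r² / 2) - ∂₃ (r v_r ∂_r v₃)`, in which the mixed second derivatives of `v₃`
cancel. Because the heights of the rectangles decrease towards the axis, every horizontal section of
`D_m` is an interval with endpoints on `∂^V D_m`, where `v_r = 0`, and every vertical section is an
interval with endpoints on `∂^H D_m`, along which `v₃` vanishes and hence `∂_r v₃ = 0`. By Fubini
and the fundamental theorem of calculus on each section, both terms integrate to zero.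
-/

noncomputable section

open Real MeasureTheory Set

/-- Inner radius of the `j`-th rectangle: `r_j = 2^(-j)`. -/
def rW (j : ℕ) : ℝ := (2 : ℝ) ^ (-(j : ℝ))

/-- Height of the `j`-th rectangle: `h_j = 2^(-β (j-1))`. -/
def hH (β : ℝ) (j : ℕ) : ℝ := (2 : ℝ) ^ (-β * ((j : ℝ) - 1))

/-- The rectangle `S_j` in the `(r, x₃)` cross-section. -/
def Srect (β : ℝ) (j : ℕ) : Set (ℝ × ℝ) :=
  {p : ℝ × ℝ | rW j ≤ p.1 ∧ p.1 < rW (j - 1) ∧ 0 < p.2 ∧ p.2 < hH β j}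

/-- The `(r, x₃)` cross-section of the domain `D_m`. -/
def Ddom (β : ℝ) (m : ℕ) : Set (ℝ × ℝ) := ⋃ j ∈ Finset.Icc 1 m, Srect β j

/-- The horizontal part `∂^H D_m` of the boundary of `D_m` (where `x₃` is locally constant). -/
def bdH (β : ℝ) (m : ℕ) : Set (ℝ × ℝ) :=
  {p : ℝ × ℝ | p.2 = 0 ∧ rW m ≤ p.1 ∧ p.1 ≤ 1} ∪
    ⋃ j ∈ Finset.Icc 1 m,
      {p : ℝ × ℝ | p.2 = hH β j ∧ rW j ≤ p.1 ∧ p.1 ≤ rW (j - 1)}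

/-- The vertical part `∂^V D_m` of the boundary of `D_m` (where `r` is locally constant). -/
def bdV (β : ℝ) (m : ℕ) : Set (ℝ × ℝ) :=
  {p : ℝ × ℝ | p.1 = 1 ∧ 0 ≤ p.2 ∧ p.2 ≤ 1} ∪
    {p : ℝ × ℝ | p.1 = rW m ∧ 0 ≤ p.2 ∧ p.2 ≤ hH β m} ∪
    ⋃ j ∈ Finset.Icc 1 (m - 1),
      {p : ℝ × ℝ | p.1 = rW j ∧ hH β (j + 1) ≤ p.2 ∧ p.2 ≤ hH β j}

/-- The full boundary `∂ D_m` of `D_m`. -/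
def bdD (β : ℝ) (m : ℕ) : Set (ℝ × ℝ) := bdH β m ∪ bdV β m

/-- The corner points of the polygonal cross-section of `D_m`
(i.e. the corner circles of the 3D domain). -/
def cornerSet (β : ℝ) (m : ℕ) : Set (ℝ × ℝ) :=
  ({(rW m, 0), ((1 : ℝ), 0), ((1 : ℝ), (1 : ℝ)), (rW m, hH β m)} : Set (ℝ × ℝ)) ∪
    ⋃ j ∈ Finset.Icc 1 (m - 1),
      ({(rW j, hH β j), (rW j, hH β (j + 1))} : Set (ℝ × ℝ))

/-- Radial partial derivative `∂_r`. -/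
def pdr (F : ℝ × ℝ → ℝ) (p : ℝ × ℝ) : ℝ := deriv (fun r => F (r, p.2)) p.1

/-- Vertical partial derivative `∂_{x₃}`. -/
def pdz (F : ℝ × ℝ → ℝ) (p : ℝ × ℝ) : ℝ := deriv (fun z => F (p.1, z)) p.2

/-- The axially symmetric Laplacian `Δ = ∂_r² + (1/r) ∂_r + ∂_{x₃}²`. -/
def cylLap (F : ℝ × ℝ → ℝ) (p : ℝ × ℝ) : ℝ :=
  pdr (pdr F) p + (1 / p.1) * pdr F p + pdz (pdz F) p

/-- The integral of an axially symmetric function over the 3-dimensional domain `D_m`,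
computed in the cross-section: `∫_{D_m} f dx = 2π ∬ F r dr dx₃`. -/
def cylIntegral (β : ℝ) (m : ℕ) (F : ℝ × ℝ → ℝ) : ℝ :=
  ∫ p in Ddom β m, F p * (2 * π * p.1)

/-- The vertical cross-section segment `D_m ∩ {r = c}` of the cross-section. -/
def vertSeg (β : ℝ) (m : ℕ) (c : ℝ) : Set ℝ := {z : ℝ | (c, z) ∈ Ddom β m}

open scoped Topology

theorem contDiffAt_of_exists_isOpen_contDiffOn {E F : Type*} [NormedAddCommGroup E]
    [NormedSpace ℝ E] [NormedAddCommGroup F] [NormedSpace ℝ F] {n : WithTop ℕ∞} {s : Set E}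
    {f : E → F} (hf : ∃ U : Set E, IsOpen U ∧ s ⊆ U ∧ ContDiffOn ℝ n f U) :
    ∀ x ∈ s, ContDiffAt ℝ n f x := by
  obtain ⟨U, hU, hsU, hfU⟩ := hf
  exact fun x hx ↦ hfU.contDiffAt (hU.mem_nhds (hsU hx))

theorem hasDerivAt_pdr {F : ℝ × ℝ → ℝ} {p : ℝ × ℝ} (hF : DifferentiableAt ℝ F p) :
    HasDerivAt (fun r ↦ F (r, p.2)) (pdr F p) p.1 :=
  (hF.comp p.1 (f := fun r ↦ (r, p.2)) (by fun_prop)).hasDerivAt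

theorem hasDerivAt_pdz {F : ℝ × ℝ → ℝ} {p : ℝ × ℝ} (hF : DifferentiableAt ℝ F p) :
    HasDerivAt (fun z ↦ F (p.1, z)) (pdz F p) p.2 :=
  (hF.comp p.2 (f := fun z ↦ (p.1, z)) (by fun_prop)).hasDerivAt

theorem pdr_eq_fderiv {F : ℝ × ℝ → ℝ} {p : ℝ × ℝ} (hF : DifferentiableAt ℝ F p) :
    pdr F p = fderiv ℝ F p (1, 0) :=
  (hF.hasFDerivAt.comp_hasDerivAt (f := fun r ↦ (r, p.2)) p.1
    ((hasDerivAt_id p.1).prodMk (hasDerivAt_const p.1 p.2))).deriv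

theorem pdz_eq_fderiv {F : ℝ × ℝ → ℝ} {p : ℝ × ℝ} (hF : DifferentiableAt ℝ F p) :
    pdz F p = fderiv ℝ F p (0, 1) :=
  (hF.hasFDerivAt.comp_hasDerivAt (f := fun z ↦ (p.1, z)) p.2
    ((hasDerivAt_const p.2 p.1).prodMk (hasDerivAt_id p.2))).deriv

theorem pdr_eventuallyEq_fderiv {F : ℝ × ℝ → ℝ} {p : ℝ × ℝ} (hF : ContDiffAt ℝ 1 F p) :
    pdr F =ᶠ[𝓝 p] fun q ↦ fderiv ℝ F q (1, 0) :=
  (hF.eventually (by simp)).mono fun _ hq ↦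
    pdr_eq_fderiv (hq.differentiableAt one_ne_zero)

theorem pdz_eventuallyEq_fderiv {F : ℝ × ℝ → ℝ} {p : ℝ × ℝ} (hF : ContDiffAt ℝ 1 F p) :
    pdz F =ᶠ[𝓝 p] fun q ↦ fderiv ℝ F q (0, 1) :=
  (hF.eventually (by simp)).mono fun _ hq ↦
    pdz_eq_fderiv (hq.differentiableAt one_ne_zero)

theorem contDiffAt_pdr {F : ℝ × ℝ → ℝ} {p : ℝ × ℝ} {k n : WithTop ℕ∞} (hF : ContDiffAt ℝ n F p)
    (hkn : k + 1 ≤ n) : ContDiffAt ℝ k (pdr F) p :=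
  ((hF.fderiv_right hkn).clm_apply contDiffAt_const).congr_of_eventuallyEq
    (pdr_eventuallyEq_fderiv (hF.of_le (le_add_self.trans hkn)))

theorem contDiffAt_pdz {F : ℝ × ℝ → ℝ} {p : ℝ × ℝ} {k n : WithTop ℕ∞} (hF : ContDiffAt ℝ n F p)
    (hkn : k + 1 ≤ n) : ContDiffAt ℝ k (pdz F) p :=
  ((hF.fderiv_right hkn).clm_apply contDiffAt_const).congr_of_eventuallyEq
    (pdz_eventuallyEq_fderiv (hF.of_le (le_add_self.trans hkn)))

theorem continuousOn_pdr {F : ℝ × ℝ → ℝ} {s : Set (ℝ × ℝ)} (hF : ∀ p ∈ s, ContDiffAt ℝ 1 F p) :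
    ContinuousOn (pdr F) s := fun p hp ↦
  (contDiffAt_pdr (hF p hp) (zero_add 1).le).continuousAt.continuousWithinAt

theorem continuousOn_pdz {F : ℝ × ℝ → ℝ} {s : Set (ℝ × ℝ)} (hF : ∀ p ∈ s, ContDiffAt ℝ 1 F p) :
    ContinuousOn (pdz F) s := fun p hp ↦
  (contDiffAt_pdz (hF p hp) (zero_add 1).le).continuousAt.continuousWithinAt

theorem pdz_pdr_eq_pdr_pdz {F : ℝ × ℝ → ℝ} {p : ℝ × ℝ} (hF : ContDiffAt ℝ 2 F p) :
    pdz (pdr F) p = pdr (pdz F) p := by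
  have hF1 : ContDiffAt ℝ 1 F p := hF.of_le one_le_two
  have hdF : DifferentiableAt ℝ (fderiv ℝ F) p :=
    (hF.fderiv_right (m := 1) (by norm_num)).differentiableAt one_ne_zero
  have hsymm := hF.isSymmSndFDerivAt (by simp)
  rw [pdz_eq_fderiv ((contDiffAt_pdr hF (k := 1) (by norm_num)).differentiableAt one_ne_zero),
    pdr_eq_fderiv ((contDiffAt_pdz hF (k := 1) (by norm_num)).differentiableAt one_ne_zero),
    (pdr_eventuallyEq_fderiv hF1).fderiv_eq, (pdz_eventuallyEq_fderiv hF1).fderiv_eq,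
    fderiv_clm_apply hdF (differentiableAt_const _),
    fderiv_clm_apply hdF (differentiableAt_const _)]
  simpa using hsymm (0, 1) (1, 0)

theorem pdr_eq_zero_of_eq_const_on_Icc {F : ℝ × ℝ → ℝ} {a b c r z : ℝ}
    (hF : DifferentiableAt ℝ F (r, z)) (hab : a < b) (hr : r ∈ Icc a b)
    (hc : ∀ x ∈ Icc a b, F (x, z) = c) : pdr F (r, z) = 0 := by
  have hconst : HasDerivWithinAt (fun x ↦ F (x, z)) 0 (Icc a b) r :=
    (hasDerivWithinAt_const r (Icc a b) c).congr hc (hc r hr)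
  exact (uniqueDiffOn_Icc hab r hr).eq_deriv _ (hasDerivAt_pdr hF).hasDerivWithinAt hconst

theorem ae_eq_Icc_of_Ioo_subset_of_subset_Icc {s : Set ℝ} {a b : ℝ} (hsub : Ioo a b ⊆ s)
    (hsup : s ⊆ Icc a b) : s =ᵐ[volume] Icc a b :=
  hsup.eventuallyLE.antisymm (Ioo_ae_eq_Icc.symm.le.trans hsub.eventuallyLE)

theorem exists_Ioo_subset_subset_Icc {s : Set ℝ} (hs : s.OrdConnected)
    (hb : Bornology.IsBounded s) (hne : s.Nonempty) :
    ∃ a b, a ≤ b ∧ Ioo a b ⊆ s ∧ s ⊆ Icc a b ∧ Icc a b ⊆ closure s ∧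
      a ∈ frontier s ∧ b ∈ frontier s := by
  have hsup : s ⊆ Icc (sInf s) (sSup s) := subset_Icc_csInf_csSup hb.bddBelow hb.bddAbove
  have hint : interior s ⊆ Ioo (sInf s) (sSup s) := interior_Icc (α := ℝ) ▸ interior_mono hsup
  have ha : sInf s ∈ closure s := csInf_mem_closure hne hb.bddBelow
  have hb' : sSup s ∈ closure s := csSup_mem_closure hne hb.bddAbove
  exact ⟨sInf s, sSup s, Real.sInf_le_sSup s hb.bddBelow hb.bddAbove,
    IsConnected.Ioo_csInf_csSup_subset ⟨hne, hs.isPreconnected⟩ hb.bddBelow hb.bddAbove, hsup,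
    hs.convex.closure.ordConnected.out ha hb', ⟨ha, fun h ↦ (hint h).1.false⟩,
    ⟨hb', fun h ↦ (hint h).2.false⟩⟩

theorem setIntegral_eq_zero_of_hasDerivAt_of_frontier {E : Type*} [NormedAddCommGroup E]
    [NormedSpace ℝ E] [CompleteSpace E] {s : Set ℝ} {f f' : ℝ → E}
    (hs : s.OrdConnected) (hb : Bornology.IsBounded s) (hcont : ContinuousOn f (closure s))
    (hderiv : ∀ x ∈ interior s, HasDerivAt f (f' x) x) (hint : IntegrableOn f' s)
    (h0 : ∀ x ∈ frontier s, f x = 0) : ∫ x in s, f' x = 0 := by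
  obtain rfl | hne := s.eq_empty_or_nonempty
  · simp
  obtain ⟨a, b, hab, hsub, hsup, hcl, ha, hb'⟩ := exists_Ioo_subset_subset_Icc hs hb hne
  have hae := ae_eq_Icc_of_Ioo_subset_of_subset_Icc hsub hsup
  have hint' : IntervalIntegrable f' volume a b :=
    (intervalIntegrable_iff_integrableOn_Icc_of_le hab).2 (hint.congr_set_ae hae.symm)
  calc ∫ x in s, f' x = ∫ x in a..b, f' x := by
        rw [setIntegral_congr_set hae, integral_Icc_eq_integral_Ioc,
          intervalIntegral.integral_of_le hab]
    _ = f b - f a := intervalIntegral.integral_eq_sub_of_hasDerivAt_of_le hab (hcont.mono hcl)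
        (fun x hx ↦ hderiv x (interior_maximal hsub isOpen_Ioo hx)) hint'
    _ = 0 := by rw [h0 a ha, h0 b hb', sub_zero]

theorem integrableOn_of_continuousOn_closure {X E : Type*} [PseudoMetricSpace X] [ProperSpace X]
    [MeasurableSpace X] [OpensMeasurableSpace X] [NormedAddCommGroup E] {μ : Measure X}
    [IsFiniteMeasureOnCompacts μ] {s : Set X} {f : X → E} (hs : Bornology.IsBounded s)
    (hf : ContinuousOn f (closure s)) : IntegrableOn f s μ :=
  (hf.integrableOn_compact' hs.isCompact_closure isClosed_closure.measurableSet).mono_set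
    subset_closure

theorem setIntegral_pdr_eq_zero {D : Set (ℝ × ℝ)} {F : ℝ × ℝ → ℝ} (hD : MeasurableSet D)
    (hb : Bornology.IsBounded D) (hrow : ∀ z, {r | (r, z) ∈ D}.OrdConnected)
    (hF : ∀ p ∈ closure D, ContDiffAt ℝ 1 F p)
    (h0 : ∀ z, ∀ r ∈ frontier {r | (r, z) ∈ D}, F (r, z) = 0) :
    ∫ p in D, pdr F p = 0 := by
  have hint : IntegrableOn (pdr F) D :=
    integrableOn_of_continuousOn_closure hb (continuousOn_pdr hF)
  have hint' := (integrable_indicator_iff hD).2 hint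
  rw [← integral_indicator hD, Measure.volume_eq_prod, integral_prod_symm _ hint']
  refine integral_eq_zero_of_ae ?_
  filter_upwards [Integrable.prod_left_ae hint'] with z hz
  have hsec : MeasurableSet {r | (r, z) ∈ D} := measurable_prodMk_right hD
  have hcl : ∀ r ∈ closure {r | (r, z) ∈ D}, (r, z) ∈ closure D := fun r hr ↦
    map_mem_closure (f := fun r ↦ (r, z)) (by fun_prop) hr fun _ ↦ id
  calc ∫ r, D.indicator (pdr F) (r, z) = ∫ r in {r | (r, z) ∈ D}, pdr F (r, z) :=
        integral_indicator hsec
    _ = 0 := setIntegral_eq_zero_of_hasDerivAt_of_frontier (hrow z)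
        (hb.image_fst.subset fun r hr ↦ ⟨(r, z), hr, rfl⟩)
        (fun r hr ↦ ((hF _ (hcl r hr)).continuousAt.comp (f := fun r ↦ (r, z))
          (by fun_prop)).continuousWithinAt)
        (fun r hr ↦ hasDerivAt_pdr (p := (r, z))
          ((hF _ (hcl r (subset_closure (interior_subset hr)))).differentiableAt one_ne_zero))
        ((integrable_indicator_iff hsec).1 hz) (h0 z)

theorem setIntegral_pdz_eq_zero {D : Set (ℝ × ℝ)} {G : ℝ × ℝ → ℝ} (hD : MeasurableSet D)
    (hb : Bornology.IsBounded D) (hcol : ∀ r, {z | (r, z) ∈ D}.OrdConnected)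
    (hG : ∀ p ∈ closure D, ContDiffAt ℝ 1 G p)
    (h0 : ∀ r, ∀ z ∈ frontier {z | (r, z) ∈ D}, G (r, z) = 0) :
    ∫ p in D, pdz G p = 0 := by
  have hb' : Bornology.IsBounded (Prod.swap ⁻¹' D) := by
    rw [← image_swap_eq_preimage_swap]
    exact (hb.image_snd.prod hb.image_fst).subset fun _ ⟨q, hq, hp⟩ ↦
      hp ▸ ⟨⟨q, hq, rfl⟩, ⟨q, hq, rfl⟩⟩
  have hcl : ∀ p ∈ closure (Prod.swap ⁻¹' D), p.swap ∈ closure D := fun p hp ↦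
    map_mem_closure continuous_swap hp fun _ ↦ id
  calc ∫ p in D, pdz G p = ∫ p in Prod.swap ⁻¹' D, pdr (G ∘ Prod.swap) p :=
        (Measure.measurePreserving_swap.setIntegral_preimage_emb
          MeasurableEquiv.prodComm.measurableEmbedding (pdz G) D).symm
    _ = 0 := setIntegral_pdr_eq_zero (measurable_swap hD) hb' hcol
        (fun p hp ↦ (hG _ (hcl p hp)).comp p (contDiff_snd.prodMk contDiff_fst).contDiffAt) h0

/-- The three-dimensional integral of an axially symmetric function over the solid of revolution
with cross-section `D`, for an arbitrary `D` in place of the `Ddom β m` of `cylIntegral`. -/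
def cylIntegralOn (D : Set (ℝ × ℝ)) (f : ℝ × ℝ → ℝ) : ℝ := ∫ p in D, f p * (2 * π * p.1)

section CylIntegralOn

variable {D : Set (ℝ × ℝ)} {f g : ℝ × ℝ → ℝ}

theorem integrableOn_mul_two_pi_fst (hb : Bornology.IsBounded D)
    (hf : ContinuousOn f (closure D)) : IntegrableOn (fun p ↦ f p * (2 * π * p.1)) D :=
  integrableOn_of_continuousOn_closure hb (by fun_prop)

theorem cylIntegralOn_add (hb : Bornology.IsBounded D) (hf : ContinuousOn f (closure D))
    (hg : ContinuousOn g (closure D)) :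
    cylIntegralOn D (fun p ↦ f p + g p) = cylIntegralOn D f + cylIntegralOn D g := by
  simp only [cylIntegralOn, add_mul]
  exact integral_add (integrableOn_mul_two_pi_fst hb hf) (integrableOn_mul_two_pi_fst hb hg)

theorem cylIntegralOn_const_mul (c : ℝ) :
    cylIntegralOn D (fun p ↦ c * f p) = c * cylIntegralOn D f := by
  simp only [cylIntegralOn, mul_assoc, integral_const_mul]

theorem cylIntegralOn_sub (hb : Bornology.IsBounded D) (hf : ContinuousOn f (closure D))
    (hg : ContinuousOn g (closure D)) :
    cylIntegralOn D (fun p ↦ f p - g p) = cylIntegralOn D f - cylIntegralOn D g := by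
  simp only [cylIntegralOn, sub_mul]
  exact integral_sub (integrableOn_mul_two_pi_fst hb hf) (integrableOn_mul_two_pi_fst hb hg)

end CylIntegralOn

/-- The radial component of the vector field on the `(r, x₃)` half-plane whose planar divergence
measures the difference between the strain and gradient densities of `(v_r, v₃)`. -/
def radialFlux (vr v3 : ℝ × ℝ → ℝ) (p : ℝ × ℝ) : ℝ := p.1 * vr p * pdz v3 p + vr p ^ 2 / 2

/-- The axial component of the vector field whose radial component is `radialFlux`. -/
def axialFlux (vr v3 : ℝ × ℝ → ℝ) (p : ℝ × ℝ) : ℝ := -(p.1 * vr p * pdr v3 p)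

section Flux

variable {vr v3 : ℝ × ℝ → ℝ} {p : ℝ × ℝ}

theorem contDiffAt_radialFlux (hvr : ContDiffAt ℝ 1 vr p) (hv3 : ContDiffAt ℝ 2 v3 p) :
    ContDiffAt ℝ 1 (radialFlux vr v3) p :=
  ((contDiffAt_fst.mul hvr).mul (contDiffAt_pdz hv3 (by norm_num))).add ((hvr.pow 2).div_const 2)

theorem contDiffAt_axialFlux (hvr : ContDiffAt ℝ 1 vr p) (hv3 : ContDiffAt ℝ 2 v3 p) :
    ContDiffAt ℝ 1 (axialFlux vr v3) p :=
  ((contDiffAt_fst.mul hvr).mul (contDiffAt_pdr hv3 (by norm_num))).neg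

theorem pdr_radialFlux (hvr : ContDiffAt ℝ 1 vr p) (hv3 : ContDiffAt ℝ 2 v3 p) :
    pdr (radialFlux vr v3) p = (vr p + p.1 * pdr vr p) * pdz v3 p
      + p.1 * vr p * pdr (pdz v3) p + vr p * pdr vr p := by
  have hr := hasDerivAt_pdr (hvr.differentiableAt one_ne_zero)
  have hz := hasDerivAt_pdr
    ((contDiffAt_pdz hv3 (k := 1) (by norm_num)).differentiableAt one_ne_zero)
  refine ((((hasDerivAt_id p.1).mul hr).mul hz).add ((hr.pow 2).div_const 2)).deriv.trans ?_
  simp only [id, Pi.mul_apply, Nat.cast_ofNat, Nat.reduceSub, pow_one]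
  ring

theorem pdz_axialFlux (hvr : ContDiffAt ℝ 1 vr p) (hv3 : ContDiffAt ℝ 2 v3 p) :
    pdz (axialFlux vr v3) p =
      -(p.1 * pdz vr p * pdr v3 p + p.1 * vr p * pdz (pdr v3) p) := by
  have hr := hasDerivAt_pdz (hvr.differentiableAt one_ne_zero)
  have hz := hasDerivAt_pdz
    ((contDiffAt_pdr hv3 (k := 1) (by norm_num)).differentiableAt one_ne_zero)
  exact ((hr.const_mul p.1).mul hz).neg.deriv

theorem strain_sub_gradient_eq_div_flux (hvr : ContDiffAt ℝ 1 vr p) (hv3 : ContDiffAt ℝ 2 v3 p)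
    (hp : p.1 ≠ 0) (hdiv : pdr vr p + vr p / p.1 + pdz v3 p = 0) :
    (2 * (pdz vr p + pdr v3 p) ^ 2 + 4 * (pdr vr p ^ 2 + vr p ^ 2 / p.1 ^ 2) + 4 * pdz v3 p ^ 2
        - 2 * ((pdr vr p ^ 2 + pdz vr p ^ 2) + vr p ^ 2 / p.1 ^ 2
          + (pdr v3 p ^ 2 + pdz v3 p ^ 2))) * p.1 =
      -4 * (pdr (radialFlux vr v3) p + pdz (axialFlux vr v3) p) := by
  have hv3z : pdz v3 p = -(pdr vr p + vr p / p.1) := by linarith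
  rw [pdr_radialFlux hvr hv3, pdz_axialFlux hvr hv3, pdz_pdr_eq_pdr_pdz hv3, hv3z]
  field_simp
  ring

end Flux

theorem setIntegral_div_flux_eq_zero {D : Set (ℝ × ℝ)} {vr v3 : ℝ × ℝ → ℝ}
    (hD : MeasurableSet D) (hb : Bornology.IsBounded D)
    (hrow : ∀ z, {r | (r, z) ∈ D}.OrdConnected) (hcol : ∀ r, {z | (r, z) ∈ D}.OrdConnected)
    (hvr : ∀ p ∈ closure D, ContDiffAt ℝ 1 vr p) (hv3 : ∀ p ∈ closure D, ContDiffAt ℝ 2 v3 p)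
    (hvr0 : ∀ z, ∀ r ∈ frontier {r | (r, z) ∈ D}, vr (r, z) = 0)
    (hv30 : ∀ r, ∀ z ∈ frontier {z | (r, z) ∈ D}, pdr v3 (r, z) = 0) :
    ∫ p in D, (pdr (radialFlux vr v3) p + pdz (axialFlux vr v3) p) = 0 := by
  have hF : ∀ p ∈ closure D, ContDiffAt ℝ 1 (radialFlux vr v3) p := fun p hp ↦
    contDiffAt_radialFlux (hvr p hp) (hv3 p hp)
  have hG : ∀ p ∈ closure D, ContDiffAt ℝ 1 (axialFlux vr v3) p := fun p hp ↦
    contDiffAt_axialFlux (hvr p hp) (hv3 p hp)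
  rw [integral_add (integrableOn_of_continuousOn_closure hb (continuousOn_pdr hF))
      (integrableOn_of_continuousOn_closure hb (continuousOn_pdz hG)),
    setIntegral_pdr_eq_zero hD hb hrow hF fun z r hr ↦ by simp [radialFlux, hvr0 z r hr],
    setIntegral_pdz_eq_zero hD hb hcol hG fun r z hz ↦ by simp [axialFlux, hv30 r z hz], add_zero]

theorem strain_gradient_identity_general {D : Set (ℝ × ℝ)} {vr v3 : ℝ × ℝ → ℝ}
    (hD : MeasurableSet D) (hb : Bornology.IsBounded D) (hr : ∀ p ∈ closure D, p.1 ≠ 0)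
    (hrow : ∀ z, {r | (r, z) ∈ D}.OrdConnected) (hcol : ∀ r, {z | (r, z) ∈ D}.OrdConnected)
    (hvr : ∀ p ∈ closure D, ContDiffAt ℝ 1 vr p) (hv3 : ∀ p ∈ closure D, ContDiffAt ℝ 2 v3 p)
    (hdiv : ∀ p ∈ D, pdr vr p + vr p / p.1 + pdz v3 p = 0)
    (hvr0 : ∀ z, ∀ r ∈ frontier {r | (r, z) ∈ D}, vr (r, z) = 0)
    (hv30 : ∀ r, ∀ z ∈ frontier {z | (r, z) ∈ D}, pdr v3 (r, z) = 0) :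
    2 * (cylIntegralOn D fun p ↦ (pdz vr p + pdr v3 p) ^ 2)
        + 4 * (cylIntegralOn D fun p ↦ pdr vr p ^ 2 + vr p ^ 2 / p.1 ^ 2)
        + 4 * (cylIntegralOn D fun p ↦ pdz v3 p ^ 2) =
      2 * cylIntegralOn D (fun p ↦ (pdr vr p ^ 2 + pdz vr p ^ 2) + vr p ^ 2 / p.1 ^ 2
        + (pdr v3 p ^ 2 + pdz v3 p ^ 2)) := by
  have hcvr : ContinuousOn vr (closure D) := fun p hp ↦
    (hvr p hp).continuousAt.continuousWithinAt
  have hcvrr := continuousOn_pdr hvr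
  have hcvrz := continuousOn_pdz hvr
  have hcv3r := continuousOn_pdr fun p hp ↦ (hv3 p hp).of_le one_le_two
  have hcv3z := continuousOn_pdz fun p hp ↦ (hv3 p hp).of_le one_le_two
  have hcq : ContinuousOn (fun p ↦ vr p ^ 2 / p.1 ^ 2) (closure D) :=
    (hcvr.pow 2).div (continuousOn_fst.pow 2) fun p hp ↦ pow_ne_zero 2 (hr p hp)
  rw [← sub_eq_zero]
  simp only [← cylIntegralOn_const_mul]
  rw [← cylIntegralOn_add hb (by fun_prop) (by fun_prop),
    ← cylIntegralOn_add hb (by fun_prop) (by fun_prop),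
    ← cylIntegralOn_sub hb (by fun_prop) (by fun_prop)]
  calc _ = ∫ p in D, -(8 * π) * (pdr (radialFlux vr v3) p + pdz (axialFlux vr v3) p) :=
        setIntegral_congr_fun hD fun p hp ↦ by
          have hp' := subset_closure hp
          linear_combination 2 * π *
            strain_sub_gradient_eq_div_flux (hvr p hp') (hv3 p hp') (hr p hp') (hdiv p hp)
    _ = 0 := by
        rw [integral_const_mul,
          setIntegral_div_flux_eq_zero hD hb hrow hcol hvr hv3 hvr0 hv30, mul_zero]

theorem rW_pos (j : ℕ) : 0 < rW j := Real.rpow_pos_of_pos two_pos _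

theorem rW_zero : rW 0 = 1 := by simp [rW]

theorem strictAnti_rW : StrictAnti rW := fun _ _ hij ↦
  Real.rpow_lt_rpow_of_exponent_lt one_lt_two (neg_lt_neg (Nat.cast_lt.2 hij))

theorem hH_pos (β : ℝ) (j : ℕ) : 0 < hH β j := Real.rpow_pos_of_pos two_pos _

theorem hH_one (β : ℝ) : hH β 1 = 1 := by simp [hH]

theorem antitone_hH {β : ℝ} (hβ : 0 ≤ β) : Antitone (hH β) := fun i j hij ↦ by
  have hij' : (i : ℝ) ≤ j := Nat.cast_le.2 hij
  exact Real.rpow_le_rpow_of_exponent_le one_le_two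
    (mul_le_mul_of_nonpos_left (sub_le_sub_right hij' 1) (neg_nonpos.2 hβ))

theorem exists_mem_Ico_pred_of_le_of_lt {α : Type*} [LinearOrder α] {f : ℕ → α} {k : ℕ} {x : α}
    (hk : f k ≤ x) (h0 : x < f 0) : ∃ j ∈ Finset.Icc 1 k, x ∈ Ico (f j) (f (j - 1)) := by
  induction k with
  | zero => exact absurd hk h0.not_ge
  | succ k ih =>
    obtain hx | hx := lt_or_ge x (f k)
    · exact ⟨k + 1, by simp, hk, hx⟩
    · obtain ⟨j, hj, hxj⟩ := ih hx
      exact ⟨j, Finset.Icc_subset_Icc_right k.le_succ hj, hxj⟩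

theorem Srect_eq_prod (β : ℝ) (j : ℕ) :
    Srect β j = Ico (rW j) (rW (j - 1)) ×ˢ Ioo 0 (hH β j) := by
  ext p
  simp [Srect, and_assoc]

theorem mem_Ddom_iff {β r z : ℝ} {m : ℕ} :
    (r, z) ∈ Ddom β m ↔
      ∃ j ∈ Finset.Icc 1 m, r ∈ Ico (rW j) (rW (j - 1)) ∧ z ∈ Ioo 0 (hH β j) := by
  simp only [Ddom, Srect_eq_prod, mem_iUnion, exists_prop, mem_prod]

theorem measurableSet_Ddom (β : ℝ) (m : ℕ) : MeasurableSet (Ddom β m) :=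
  Finset.measurableSet_biUnion _ fun j _ ↦
    Srect_eq_prod β j ▸ measurableSet_Ico.prod measurableSet_Ioo

theorem closure_Ddom_subset_Icc {β : ℝ} (hβ : 0 ≤ β) (m : ℕ) :
    closure (Ddom β m) ⊆ Icc (rW m, 0) (1, 1) := by
  refine closure_minimal (fun ⟨r, z⟩ hp ↦ ?_) isClosed_Icc
  obtain ⟨j, hj, hr, hz⟩ := mem_Ddom_iff.1 hp
  obtain ⟨hj1, hjm⟩ := Finset.mem_Icc.1 hj
  have hr1 : rW (j - 1) ≤ 1 := rW_zero ▸ strictAnti_rW.antitone (Nat.zero_le _)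
  have hz1 : hH β j ≤ 1 := hH_one β ▸ antitone_hH hβ hj1
  exact ⟨⟨(strictAnti_rW.antitone hjm).trans hr.1, hz.1.le⟩,
    ⟨hr.2.le.trans hr1, hz.2.le.trans hz1⟩⟩

theorem isBounded_Ddom {β : ℝ} (hβ : 0 ≤ β) (m : ℕ) : Bornology.IsBounded (Ddom β m) :=
  (Metric.isBounded_Icc _ _).subset (subset_closure.trans (closure_Ddom_subset_Icc hβ m))

theorem fst_pos_of_mem_closure_Ddom {β : ℝ} {m : ℕ} {p : ℝ × ℝ} (hβ : 0 ≤ β)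
    (hp : p ∈ closure (Ddom β m)) : 0 < p.1 :=
  (rW_pos m).trans_le (closure_Ddom_subset_Icc hβ m hp).1.1

theorem vertSeg_eq_Ioo {β r : ℝ} {m j : ℕ} (hj : j ∈ Finset.Icc 1 m)
    (hr : r ∈ Ico (rW j) (rW (j - 1))) : vertSeg β m r = Ioo 0 (hH β j) := by
  ext z
  refine mem_Ddom_iff.trans ⟨fun ⟨i, _, hri, hz⟩ ↦ ?_, fun hz ↦ ⟨j, hj, hr, hz⟩⟩
  have hij : i = j := by
    by_contra hij
    exact (strictAnti_rW.antitone.pairwise_disjoint_on_Ico_pred hij).le_bot ⟨hri, hr⟩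
  exact hij ▸ hz

theorem vertSeg_eq_empty_or_eq_Ioo (β : ℝ) (m : ℕ) (r : ℝ) :
    vertSeg β m r = ∅ ∨
      ∃ j ∈ Finset.Icc 1 m, r ∈ Ico (rW j) (rW (j - 1)) ∧ vertSeg β m r = Ioo 0 (hH β j) := by
  obtain h | ⟨z, hz⟩ := (vertSeg β m r).eq_empty_or_nonempty
  · exact .inl h
  · obtain ⟨j, hj, hr, -⟩ := mem_Ddom_iff.1 hz
    exact .inr ⟨j, hj, hr, vertSeg_eq_Ioo hj hr⟩

theorem ordConnected_vertSeg (β : ℝ) (m : ℕ) (r : ℝ) : (vertSeg β m r).OrdConnected := by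
  obtain h | ⟨j, -, -, h⟩ := vertSeg_eq_empty_or_eq_Ioo β m r <;> rw [h]
  exacts [ordConnected_empty, ordConnected_Ioo]

-- When `r` is an inner radius `rW j`, the top of its section belongs to a segment of `∂^H D_m` only
-- on the side of larger radii, so `r` may be an endpoint of `[a, b]`.
theorem exists_Icc_prod_subset_bdH_of_mem_frontier_vertSeg {β r z : ℝ} {m : ℕ}
    (hz : z ∈ frontier (vertSeg β m r)) :
    ∃ a b, a < b ∧ r ∈ Icc a b ∧ ∀ x ∈ Icc a b, (x, z) ∈ bdH β m := by
  obtain h | ⟨j, hj, hr, h⟩ := vertSeg_eq_empty_or_eq_Ioo β m r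
  · simp [h] at hz
  obtain ⟨-, hjm⟩ := Finset.mem_Icc.1 hj
  have hrm : rW m ≤ rW j := strictAnti_rW.antitone hjm
  have hle : rW (j - 1) ≤ 1 := rW_zero ▸ strictAnti_rW.antitone (Nat.zero_le _)
  refine ⟨rW j, rW (j - 1), hr.1.trans_lt hr.2, Ico_subset_Icc_self hr, fun x hx ↦ ?_⟩
  rw [h, frontier_Ioo (hH_pos β j)] at hz
  obtain rfl | rfl := hz
  · exact .inl ⟨rfl, hrm.trans hx.1, hx.2.trans hle⟩
  · exact .inr (mem_biUnion hj ⟨rfl, hx⟩)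

/-- The horizontal section `D_m ∩ {x₃ = z}` of the cross-section, the companion of `vertSeg`. -/
def horizSeg (β : ℝ) (m : ℕ) (z : ℝ) : Set ℝ := {r : ℝ | (r, z) ∈ Ddom β m}

theorem horizSeg_eq_Ico {β z : ℝ} {m k : ℕ} (hβ : 0 ≤ β) (hk : k ∈ Finset.Icc 1 m)
    (hz : z ∈ Ioo 0 (hH β k)) (hmax : ∀ j ∈ Finset.Icc 1 m, z < hH β j → j ≤ k) :
    horizSeg β m z = Ico (rW k) 1 := by
  obtain ⟨-, hkm⟩ := Finset.mem_Icc.1 hk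
  ext r
  refine mem_Ddom_iff.trans ⟨fun ⟨j, hj, hr, hzj⟩ ↦ ?_, fun hr ↦ ?_⟩
  · have hle : rW (j - 1) ≤ 1 := rW_zero ▸ strictAnti_rW.antitone (Nat.zero_le _)
    exact ⟨(strictAnti_rW.antitone (hmax j hj hzj.2)).trans hr.1, hr.2.trans_le hle⟩
  · obtain ⟨j, hj, hrj⟩ := exists_mem_Ico_pred_of_le_of_lt hr.1 (rW_zero ▸ hr.2)
    exact ⟨j, Finset.Icc_subset_Icc_right hkm hj, hrj, hz.1,
      hz.2.trans_le (antitone_hH hβ (Finset.mem_Icc.1 hj).2)⟩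

theorem horizSeg_eq_empty_or_eq_Ico {β : ℝ} (hβ : 0 ≤ β) (m : ℕ) (z : ℝ) :
    horizSeg β m z = ∅ ∨
      ∃ k ∈ Finset.Icc 1 m, z ∈ Ioo 0 (hH β k) ∧
        (∀ j ∈ Finset.Icc 1 m, z < hH β j → j ≤ k) ∧ horizSeg β m z = Ico (rW k) 1 := by
  obtain h | ⟨r, hr⟩ := (horizSeg β m z).eq_empty_or_nonempty
  · exact .inl h
  obtain ⟨i, hi, -, hzi⟩ := mem_Ddom_iff.1 hr
  obtain ⟨k, hk, hmax⟩ := ({j ∈ Finset.Icc 1 m | z < hH β j} : Finset ℕ).exists_max_image id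
    ⟨i, Finset.mem_filter.2 ⟨hi, hzi.2⟩⟩
  obtain ⟨hk, hzk⟩ := Finset.mem_filter.1 hk
  have hmax' : ∀ j ∈ Finset.Icc 1 m, z < hH β j → j ≤ k := fun j hj hzj ↦
    hmax j (Finset.mem_filter.2 ⟨hj, hzj⟩)
  exact .inr ⟨k, hk, ⟨hzi.1, hzk⟩, hmax', horizSeg_eq_Ico hβ hk ⟨hzi.1, hzk⟩ hmax'⟩

theorem ordConnected_horizSeg {β : ℝ} (hβ : 0 ≤ β) (m : ℕ) (z : ℝ) :
    (horizSeg β m z).OrdConnected := by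
  obtain h | ⟨k, -, -, -, h⟩ := horizSeg_eq_empty_or_eq_Ico hβ m z <;> rw [h]
  exacts [ordConnected_empty, ordConnected_Ico]

theorem rW_mem_bdV {β z : ℝ} {m k : ℕ} (hk : k ∈ Finset.Icc 1 m) (hz : z ∈ Ioo 0 (hH β k))
    (hmax : ∀ j ∈ Finset.Icc 1 m, z < hH β j → j ≤ k) : (rW k, z) ∈ bdV β m := by
  obtain ⟨hk1, hkm⟩ := Finset.mem_Icc.1 hk
  obtain rfl | hlt := hkm.eq_or_lt
  · exact .inl (.inr ⟨rfl, hz.1.le, hz.2.le⟩)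
  · have hnext : hH β (k + 1) ≤ z := by
      by_contra! hlt'
      exact (hmax (k + 1) (Finset.mem_Icc.2 ⟨by simp, hlt⟩) hlt').not_gt k.lt_succ_self
    exact .inr (mem_biUnion (Finset.mem_Icc.2 ⟨hk1, Nat.le_pred_of_lt hlt⟩) ⟨rfl, hnext, hz.2.le⟩)

theorem mem_bdV_of_mem_frontier_horizSeg {β r z : ℝ} {m : ℕ} (hβ : 0 ≤ β)
    (hr : r ∈ frontier (horizSeg β m z)) : (r, z) ∈ bdV β m := by
  obtain h | ⟨k, hk, hz, hmax, h⟩ := horizSeg_eq_empty_or_eq_Ico hβ m z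
  · simp [h] at hr
  have hk1 : 1 ≤ k := (Finset.mem_Icc.1 hk).1
  have hlt : rW k < 1 := rW_zero ▸ strictAnti_rW hk1
  have hle : hH β k ≤ 1 := hH_one β ▸ antitone_hH hβ hk1
  rw [h, frontier_Ico hlt] at hr
  obtain rfl | rfl := hr
  · exact rW_mem_bdV hk hz hmax
  · exact .inl (.inl ⟨rfl, hz.1.le, hz.2.le.trans hle⟩)

theorem pdr_eq_zero_of_mem_frontier_vertSeg {β r z : ℝ} {m : ℕ} {F : ℝ × ℝ → ℝ}
    (hF : ∀ p ∈ closure (Ddom β m), DifferentiableAt ℝ F p) (h0 : ∀ p ∈ bdH β m, F p = 0)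
    (hz : z ∈ frontier (vertSeg β m r)) : pdr F (r, z) = 0 := by
  have hp : (r, z) ∈ closure (Ddom β m) :=
    map_mem_closure (f := fun z ↦ (r, z)) (by fun_prop) hz.1 fun _ ↦ id
  obtain ⟨a, b, hab, hr, hsub⟩ := exists_Icc_prod_subset_bdH_of_mem_frontier_vertSeg hz
  exact pdr_eq_zero_of_eq_const_on_Icc (hF _ hp) hab hr fun x hx ↦ h0 _ (hsub x hx)

/-- Identity between the strain-type quantities and the full gradient
for a divergence-free axially symmetric field `(v_r, v₃)`. -/
theorem strain_gradient_identity (β : ℝ) (hβ : 1 < β) (hβ' : β ≤ 1.1)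
    (m : ℕ) (hm : 1 ≤ m) (vr v3 : ℝ × ℝ → ℝ)
    (hvr : ∃ U : Set (ℝ × ℝ), IsOpen U ∧ closure (Ddom β m) ⊆ U ∧ ContDiffOn ℝ 2 vr U)
    (hv3 : ∃ U : Set (ℝ × ℝ), IsOpen U ∧ closure (Ddom β m) ⊆ U ∧ ContDiffOn ℝ 2 v3 U)
    (hdiv : ∀ p ∈ Ddom β m, pdr vr p + vr p / p.1 + pdz v3 p = 0)
    (hvrV : ∀ p ∈ bdV β m, vr p = 0)
    (hv3H : ∀ p ∈ bdH β m, v3 p = 0) :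
    2 * (cylIntegral β m fun p => (pdz vr p + pdr v3 p) ^ 2)
        + 4 * (cylIntegral β m fun p => (pdr vr p) ^ 2 + (vr p) ^ 2 / p.1 ^ 2)
        + 4 * (cylIntegral β m fun p => (pdz v3 p) ^ 2)
      = 2 * cylIntegral β m
          (fun p => ((pdr vr p) ^ 2 + (pdz vr p) ^ 2) + (vr p) ^ 2 / p.1 ^ 2
            + ((pdr v3 p) ^ 2 + (pdz v3 p) ^ 2)) := by
  have hβ0 : 0 ≤ β := zero_le_one.trans hβ.le
  have hvr2 := contDiffAt_of_exists_isOpen_contDiffOn hvr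
  have hv32 := contDiffAt_of_exists_isOpen_contDiffOn hv3
  exact strain_gradient_identity_general (measurableSet_Ddom β m) (isBounded_Ddom hβ0 m)
    (fun p hp ↦ (fst_pos_of_mem_closure_Ddom hβ0 hp).ne')
    (ordConnected_horizSeg hβ0 m) (ordConnected_vertSeg β m)
    (fun p hp ↦ (hvr2 p hp).of_le one_le_two) hv32 hdiv
    (fun z r hr ↦ hvrV _ (mem_bdV_of_mem_frontier_horizSeg hβ0 hr))
    fun r z hz ↦ pdr_eq_zero_of_mem_frontier_vertSeg
      (fun p hp ↦ (hv32 p hp).differentiableAt two_ne_zero) hv3H hz
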